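/- Let L > 0, T > 0 and fix feedback gains α, β with 0 < |α| < 1 and β > 0. There exists a constant C > 0, depending only on L, T, α and β, such that every classical solution u of the closed-loop linear KP-II system on [0,L]² × [0,T] satisfies the Kato smoothing estimate ∫₀^T ∫_Ω ( u(x,y,t)² + u_x(x,y,t)² ) dx dy dt ≤ C ∫_Ω u(x,y,0)² dx dy. -/

import Mathlib

open MeasureTheory Real

noncomputable section

/-- Partial derivative in `x` of `u(x,y,t)`. -/
def pdx (u : ℝ → ℝ → ℝ → ℝ) (x y t : ℝ) : ℝ := deriv (fun x' => u x' y t) x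

/-- Third partial derivative in `x` of `u(x,y,t)`. -/
def pdx3 (u : ℝ → ℝ → ℝ → ℝ) (x y t : ℝ) : ℝ := iteratedDeriv 3 (fun x' => u x' y t) x

/-- Partial derivative in `y` of `u(x,y,t)`. -/
def pdy (u : ℝ → ℝ → ℝ → ℝ) (x y t : ℝ) : ℝ := deriv (fun y' => u x y' t) y

/-- Second partial derivative in `y` of `u(x,y,t)`. -/
def pdy2 (u : ℝ → ℝ → ℝ → ℝ) (x y t : ℝ) : ℝ := iteratedDeriv 2 (fun y' => u x y' t) y

/-- Partial derivative in `t` of `u(x,y,t)`. -/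
def pdt (u : ℝ → ℝ → ℝ → ℝ) (x y t : ℝ) : ℝ := deriv (fun t' => u x y t') t

/-- The nonlocal operator `(∂ₓ⁻¹ w)(x,y) = -∫ₓ^L w(s,y) ds`. -/
def pxInv (L : ℝ) (w : ℝ → ℝ → ℝ) (x y : ℝ) : ℝ := -(∫ s in x..L, w s y)

/-- A classical solution of the closed-loop linear KP-II system on `[0,L]² × [0,T]`:
`u` is `C³`, satisfies `u_t + u_x + u_xxx + ∂ₓ⁻¹ u_yy = 0` on `Ω × (0,T)` and the
boundary feedback conditions for all `t ∈ [0,T]`. -/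
def IsKPSolution (L T α β : ℝ) (u : ℝ → ℝ → ℝ → ℝ) : Prop :=
  ContDiff ℝ 3 (fun p : ℝ × ℝ × ℝ => u p.1 p.2.1 p.2.2) ∧
  (∀ x ∈ Set.Ioo (0:ℝ) L, ∀ y ∈ Set.Ioo (0:ℝ) L, ∀ t ∈ Set.Ioo (0:ℝ) T,
      pdt u x y t + pdx u x y t + pdx3 u x y t
        + pxInv L (fun s y' => pdy2 u s y' t) x y = 0) ∧
  (∀ y ∈ Set.Icc (0:ℝ) L, ∀ t ∈ Set.Icc (0:ℝ) T,
      u 0 y t = 0 ∧ u L y t = 0 ∧ pdx u L y t = α * pdx u 0 y t) ∧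
  (∀ x ∈ Set.Icc (0:ℝ) L, ∀ t ∈ Set.Icc (0:ℝ) T,
      pdy u x L t = β * pdx u x L t ∧ pdy u x 0 t = 0)

/-- The energy `E(t) = ½ ∫_Ω u(x,y,t)² dx dy`. -/
def energy (L : ℝ) (u : ℝ → ℝ → ℝ → ℝ) (t : ℝ) : ℝ :=
  (1/2) * ∫ x in (0:ℝ)..L, ∫ y in (0:ℝ)..L, (u x y t)^2

open Function Set

section Calculus

/-- Differentiation under the integral sign for jointly continuous integrands. -/
theorem hasDerivAt_intervalIntegral_of_continuous {f f' : ℝ → ℝ → ℝ}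
    (hf : Continuous (uncurry f)) (hf' : Continuous (uncurry f'))
    (h : ∀ t s, HasDerivAt (fun t => f t s) (f' t s) t) (a b t : ℝ) :
    HasDerivAt (fun t => ∫ s in a..b, f t s) (∫ s in a..b, f' t s) t := by
  obtain ⟨B, hB⟩ := (((isCompact_Icc (a := t - 1) (b := t + 1)).prod
    (isCompact_uIcc (a := a) (b := b))).exists_bound_of_continuousOn hf'.continuousOn)
  refine (intervalIntegral.hasDerivAt_integral_of_dominated_loc_of_deriv_le
    (bound := fun _ => B) (F' := f')
    (Icc_mem_nhds (by linarith : t - 1 < t) (by linarith : t < t + 1)) ?_ ?_ ?_ ?_ ?_ ?_).2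
  · exact Filter.Eventually.of_forall fun x =>
      (by fun_prop : Continuous (f x)).aestronglyMeasurable
  · exact (by fun_prop : Continuous (f t)).intervalIntegrable _ _
  · exact (by fun_prop : Continuous (f' t)).aestronglyMeasurable
  · exact Filter.Eventually.of_forall fun s hs x hx => hB (x, s) ⟨hx, uIoc_subset_uIcc hs⟩
  · exact intervalIntegrable_const
  · exact Filter.Eventually.of_forall fun s _ x _ => h x s

theorem intervalIntegral_swap_of_continuous {f : ℝ → ℝ → ℝ} (hf : Continuous (uncurry f))
    (a b c d : ℝ) :
    ∫ x in a..b, ∫ y in c..d, f x y = ∫ y in c..d, ∫ x in a..b, f x y :=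
  intervalIntegral_intervalIntegral_swap
    ((hf.continuousOn.integrableOn_compact (isCompact_uIcc.prod isCompact_uIcc)).mono_set
      (prod_mono uIoc_subset_uIcc uIoc_subset_uIcc))

theorem intervalIntegral₂_sub {f g : ℝ → ℝ → ℝ} (hf : Continuous (uncurry f))
    (hg : Continuous (uncurry g)) (a b c d : ℝ) :
    ∫ x in a..b, ∫ y in c..d, (f x y - g x y) =
      (∫ x in a..b, ∫ y in c..d, f x y) - ∫ x in a..b, ∫ y in c..d, g x y := by
  rw [← intervalIntegral.integral_sub
    (Continuous.intervalIntegrable (by fun_prop) _ _)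
    (Continuous.intervalIntegrable (by fun_prop) _ _)]
  congr 1 with x
  exact intervalIntegral.integral_sub
    (Continuous.intervalIntegrable (by fun_prop) _ _)
    (Continuous.intervalIntegrable (by fun_prop) _ _)

theorem intervalIntegral₂_mono_of_le_Ioo {f g : ℝ → ℝ → ℝ} (hf : Continuous (uncurry f))
    (hg : Continuous (uncurry g)) {a b c d : ℝ} (hab : a ≤ b) (hcd : c ≤ d)
    (h : ∀ x ∈ Ioo a b, ∀ y ∈ Ioo c d, f x y ≤ g x y) :
    ∫ x in a..b, ∫ y in c..d, f x y ≤ ∫ x in a..b, ∫ y in c..d, g x y := by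
  refine intervalIntegral.integral_mono_on_of_le_Ioo hab
    (Continuous.intervalIntegrable (by fun_prop) _ _)
    (Continuous.intervalIntegrable (by fun_prop) _ _) fun x hx => ?_
  exact intervalIntegral.integral_mono_on_of_le_Ioo hcd
    (Continuous.intervalIntegrable (by fun_prop) _ _)
    (Continuous.intervalIntegrable (by fun_prop) _ _) (h x hx)

end Calculus

section PartialDerivatives

variable {u : ℝ → ℝ → ℝ → ℝ} {n : WithTop ℕ∞}

theorem hasDerivAt_pdx (hn : n ≠ 0)
    (hu : ContDiff ℝ n fun p : ℝ × ℝ × ℝ => u p.1 p.2.1 p.2.2) (x y t : ℝ) :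
    HasDerivAt (fun x => u x y t) (pdx u x y t) x :=
  ((hu.comp (by fun_prop : ContDiff ℝ n fun x : ℝ => (x, y, t))).differentiable hn x).hasDerivAt

theorem hasDerivAt_pdy (hn : n ≠ 0)
    (hu : ContDiff ℝ n fun p : ℝ × ℝ × ℝ => u p.1 p.2.1 p.2.2) (x y t : ℝ) :
    HasDerivAt (fun y => u x y t) (pdy u x y t) y :=
  ((hu.comp (by fun_prop : ContDiff ℝ n fun y : ℝ => (x, y, t))).differentiable hn y).hasDerivAt

theorem hasDerivAt_pdt (hn : n ≠ 0)
    (hu : ContDiff ℝ n fun p : ℝ × ℝ × ℝ => u p.1 p.2.1 p.2.2) (x y t : ℝ) :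
    HasDerivAt (fun t => u x y t) (pdt u x y t) t :=
  ((hu.comp (by fun_prop : ContDiff ℝ n fun t : ℝ => (x, y, t))).differentiable hn t).hasDerivAt

theorem contDiff_pdx (hu : ContDiff ℝ (n + 1) fun p : ℝ × ℝ × ℝ => u p.1 p.2.1 p.2.2) :
    ContDiff ℝ n fun p : ℝ × ℝ × ℝ => pdx u p.1 p.2.1 p.2.2 := by
  have h : ContDiff ℝ n fun p : ℝ × ℝ × ℝ =>
      fderiv ℝ (fun p : ℝ × ℝ × ℝ => u p.1 p.2.1 p.2.2) p (1, 0, 0) :=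
    (hu.fderiv_right le_rfl).clm_apply contDiff_const
  convert h using 2 with p
  have hd := (hu.differentiable (by simp) p).hasFDerivAt.comp_hasDerivAt p.1
    ((hasDerivAt_id p.1).prodMk (hasDerivAt_const p.1 p.2))
  exact hd.deriv

theorem contDiff_pdy (hu : ContDiff ℝ (n + 1) fun p : ℝ × ℝ × ℝ => u p.1 p.2.1 p.2.2) :
    ContDiff ℝ n fun p : ℝ × ℝ × ℝ => pdy u p.1 p.2.1 p.2.2 := by
  have h : ContDiff ℝ n fun p : ℝ × ℝ × ℝ =>
      fderiv ℝ (fun p : ℝ × ℝ × ℝ => u p.1 p.2.1 p.2.2) p (0, 1, 0) :=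
    (hu.fderiv_right le_rfl).clm_apply contDiff_const
  convert h using 2 with p
  have hd := (hu.differentiable (by simp) p).hasFDerivAt.comp_hasDerivAt p.2.1
    ((hasDerivAt_const p.2.1 p.1).prodMk
      ((hasDerivAt_id p.2.1).prodMk (hasDerivAt_const p.2.1 p.2.2)))
  exact hd.deriv

theorem contDiff_pdt (hu : ContDiff ℝ (n + 1) fun p : ℝ × ℝ × ℝ => u p.1 p.2.1 p.2.2) :
    ContDiff ℝ n fun p : ℝ × ℝ × ℝ => pdt u p.1 p.2.1 p.2.2 := by
  have h : ContDiff ℝ n fun p : ℝ × ℝ × ℝ =>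
      fderiv ℝ (fun p : ℝ × ℝ × ℝ => u p.1 p.2.1 p.2.2) p (0, 0, 1) :=
    (hu.fderiv_right le_rfl).clm_apply contDiff_const
  convert h using 2 with p
  have hd := (hu.differentiable (by simp) p).hasFDerivAt.comp_hasDerivAt p.2.2
    ((hasDerivAt_const p.2.2 p.1).prodMk
      ((hasDerivAt_const p.2.2 p.2.1).prodMk (hasDerivAt_id p.2.2)))
  exact hd.deriv

theorem pdx3_eq (u : ℝ → ℝ → ℝ → ℝ) : pdx3 u = pdx (pdx (pdx u)) := by
  funext x y t
  simp only [pdx3, iteratedDeriv_succ, iteratedDeriv_zero]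
  rfl

theorem pdy2_eq (u : ℝ → ℝ → ℝ → ℝ) : pdy2 u = pdy (pdy u) := by
  funext x y t
  simp only [pdy2, iteratedDeriv_succ, iteratedDeriv_zero]
  rfl

end PartialDerivatives

section WeightedEnergy

/-- Contribution of the local part `u_x + u_xxx` to the energy with affine weight `a x + K`. -/
theorem integral_affine_weight_dispersion_nonneg {L α a K : ℝ}
    (hK : (a * L + K) * α ^ 2 ≤ K) {u u₁ u₂ u₃ : ℝ → ℝ} (hu₃ : Continuous u₃)
    (h₀ : ∀ x, HasDerivAt u (u₁ x) x) (h₁ : ∀ x, HasDerivAt u₁ (u₂ x) x)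
    (h₂ : ∀ x, HasDerivAt u₂ (u₃ x) x)
    (hu0 : u 0 = 0) (huL : u L = 0) (hα : u₁ L = α * u₁ 0) :
    0 ≤ ∫ x in 0..L, (2 * (a * x + K) * u x * (u₁ x + u₃ x)
      + (a * u x ^ 2 - 3 * a * u₁ x ^ 2)) := by
  have c₀ : Continuous u := continuous_iff_continuousAt.2 fun x => (h₀ x).continuousAt
  have c₁ : Continuous u₁ := continuous_iff_continuousAt.2 fun x => (h₁ x).continuousAt
  have hd : ∀ x, HasDerivAt (fun x => (a * x + K) * u x ^ 2 + 2 * (a * x + K) * (u x * u₂ x)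
      - (a * x + K) * u₁ x ^ 2 - 2 * a * (u x * u₁ x))
      (2 * (a * x + K) * u x * (u₁ x + u₃ x) + (a * u x ^ 2 - 3 * a * u₁ x ^ 2)) x := by
    intro x
    have hw : HasDerivAt (fun x => a * x + K) a x := by
      simpa using ((hasDerivAt_id x).const_mul a).add_const K
    have := (((hw.mul ((h₀ x).pow 2)).add ((hw.const_mul 2).mul ((h₀ x).mul (h₂ x)))).sub
      (hw.mul ((h₁ x).pow 2))).sub (((h₀ x).mul (h₁ x)).const_mul (2 * a))
    refine this.congr_deriv ?_
    simp
    ring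
  rw [intervalIntegral.integral_eq_sub_of_hasDerivAt (fun x _ => hd x)
    (Continuous.intervalIntegrable (by fun_prop) _ _)]
  simp only [hu0, huL, hα]
  nlinarith [mul_nonneg (sub_nonneg.2 hK) (sq_nonneg (u₁ 0))]

/-- Contribution of `v v_x` to the energy with affine weight, when `v` vanishes at the right end. -/
theorem integral_affine_weight_mul_deriv_nonpos {L a K : ℝ} (hL : 0 ≤ L) (ha : 0 ≤ a)
    (hK : 0 ≤ K) {v v₁ : ℝ → ℝ} (hv₁ : Continuous v₁)
    (h : ∀ x, HasDerivAt v (v₁ x) x) (hvL : v L = 0) :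
    ∫ x in 0..L, 2 * (a * x + K) * v₁ x * v x ≤ 0 := by
  have c : Continuous v := continuous_iff_continuousAt.2 fun x => (h x).continuousAt
  have hd : ∀ x, HasDerivAt (fun x => (a * x + K) * v x ^ 2)
      (a * v x ^ 2 + 2 * (a * x + K) * v₁ x * v x) x := by
    intro x
    have hw : HasDerivAt (fun x => a * x + K) a x := by
      simpa using ((hasDerivAt_id x).const_mul a).add_const K
    refine (hw.mul ((h x).pow 2)).congr_deriv ?_
    simp
    ring
  have hi := intervalIntegral.integral_eq_sub_of_hasDerivAt (a := 0) (b := L) (fun x _ => hd x)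
    (Continuous.intervalIntegrable (by fun_prop) _ _)
  rw [intervalIntegral.integral_add (Continuous.intervalIntegrable (by fun_prop) _ _)
    (Continuous.intervalIntegrable (by fun_prop) _ _)] at hi
  have hp : 0 ≤ ∫ x in 0..L, a * v x ^ 2 :=
    intervalIntegral.integral_nonneg hL fun x _ => by positivity
  simp only [hvL] at hi
  nlinarith [mul_nonneg hK (sq_nonneg (v 0))]

variable {L T α β : ℝ} {u : ℝ → ℝ → ℝ → ℝ}

/-- The weighted energy inequality `∫ (a x + K) ∂ₜ(u²) ≤ a ∫ u² - 3 a ∫ u_x²` at a fixed time. -/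
theorem IsKPSolution.weighted_energy_deriv_le (hu : IsKPSolution L T α β u) (hL : 0 < L)
    (hβ : 0 ≤ β) {a K : ℝ} (ha : 0 ≤ a) (hK : 0 ≤ K) (hKα : (a * L + K) * α ^ 2 ≤ K)
    {t : ℝ} (ht : t ∈ Ioo 0 T) :
    ∫ x in 0..L, ∫ y in 0..L, 2 * (a * x + K) * u x y t * pdt u x y t ≤
      ∫ x in 0..L, ∫ y in 0..L, (a * u x y t ^ 2 - 3 * a * pdx u x y t ^ 2) := by
  obtain ⟨hC, hpde, hbx, hby⟩ := hu
  have ht' := Ioo_subset_Icc_self ht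
  have hC1 : ContDiff ℝ 2 fun p : ℝ × ℝ × ℝ => pdx u p.1 p.2.1 p.2.2 := contDiff_pdx hC
  have hC2 : ContDiff ℝ 1 fun p : ℝ × ℝ × ℝ => pdx (pdx u) p.1 p.2.1 p.2.2 := contDiff_pdx hC1
  have hC3 : ContDiff ℝ 0 fun p : ℝ × ℝ × ℝ => pdx (pdx (pdx u)) p.1 p.2.1 p.2.2 :=
    contDiff_pdx (by simpa using hC2)
  have hD1 : ContDiff ℝ 2 fun p : ℝ × ℝ × ℝ => pdy u p.1 p.2.1 p.2.2 := contDiff_pdy hC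
  have hD2 : ContDiff ℝ 1 fun p : ℝ × ℝ × ℝ => pdy (pdy u) p.1 p.2.1 p.2.2 := contDiff_pdy hD1
  have hE1 : ContDiff ℝ 2 fun p : ℝ × ℝ × ℝ => pdt u p.1 p.2.1 p.2.2 := contDiff_pdt hC
  have c0 := hC.continuous
  have c1 := hC1.continuous
  have c3 := hC3.continuous
  have d1 := hD1.continuous
  have d2 := hD2.continuous
  have e1 := hE1.continuous
  set V : ℝ → ℝ → ℝ := fun x y => ∫ s in L..x, pdy u s y t with hV
  set W : ℝ → ℝ → ℝ := fun x y => ∫ s in L..x, pdy (pdy u) s y t with hW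
  have cV : Continuous (uncurry V) := by fun_prop
  have cW : Continuous (uncurry W) := by fun_prop
  have hVx : ∀ x y, HasDerivAt (fun x => V x y) (pdy u x y t) x := fun x y =>
    ((by fun_prop : Continuous fun s => pdy u s y t).integral_hasStrictDerivAt L x).hasDerivAt
  have hVy : ∀ x y, HasDerivAt (V x) (W x y) y := fun x y =>
    hasDerivAt_intervalIntegral_of_continuous (f := fun y s => pdy u s y t)
      (f' := fun y s => pdy (pdy u) s y t) (by fun_prop) (by fun_prop)
      (fun y s => hasDerivAt_pdy two_ne_zero hD1 s y t) L x y
  have hVtop : ∀ x ∈ Icc 0 L, V x L = β * u x L t := by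
    intro x hx
    have h1 : V x L = ∫ s in L..x, β * pdx u s L t :=
      intervalIntegral.integral_congr fun s hs =>
        (hby s (uIcc_subset_Icc (right_mem_Icc.2 hL.le) hx hs) t ht').1
    rw [h1, intervalIntegral.integral_const_mul, intervalIntegral.integral_eq_sub_of_hasDerivAt
      (fun s _ => hasDerivAt_pdx three_ne_zero hC s L t)
      (Continuous.intervalIntegrable (by fun_prop) _ _),
      (hbx L (right_mem_Icc.2 hL.le) t ht').2.1, sub_zero]
  have hVbot : ∀ x ∈ Icc 0 L, V x 0 = 0 := by
    intro x hx
    have h1 : V x 0 = ∫ s in L..x, (0 : ℝ) :=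
      intervalIntegral.integral_congr fun s hs =>
        (hby s (uIcc_subset_Icc (right_mem_Icc.2 hL.le) hx hs) t ht').2
    simpa using h1
  set R : ℝ → ℝ → ℝ := fun x y => a * u x y t ^ 2 - 3 * a * pdx u x y t ^ 2 with hR
  set P : ℝ → ℝ → ℝ := fun x y => 2 * (a * x + K) * u x y t *
    (pdx u x y t + pdx (pdx (pdx u)) x y t)
    + (a * u x y t ^ 2 - 3 * a * pdx u x y t ^ 2) with hP
  set Q : ℝ → ℝ → ℝ := fun x y => 2 * (a * x + K) * (pdy u x y t * V x y + u x y t * W x y)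
    with hQ
  set S : ℝ → ℝ → ℝ := fun x y => 2 * (a * x + K) * pdy u x y t * V x y with hS
  have cR : Continuous (uncurry R) := by fun_prop
  have cP : Continuous (uncurry P) := by fun_prop
  have cQ : Continuous (uncurry Q) := by fun_prop
  have cS : Continuous (uncurry S) := by fun_prop
  have iP : 0 ≤ ∫ x in 0..L, ∫ y in 0..L, P x y := by
    rw [intervalIntegral_swap_of_continuous cP]
    refine intervalIntegral.integral_nonneg hL.le fun y hy => ?_
    obtain ⟨b0, bL, bα⟩ := hbx y hy t ht'
    exact integral_affine_weight_dispersion_nonneg hKα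
      (u := fun x => u x y t) (u₁ := fun x => pdx u x y t) (u₂ := fun x => pdx (pdx u) x y t)
      (by fun_prop)
      (fun x => hasDerivAt_pdx three_ne_zero hC x y t)
      (fun x => hasDerivAt_pdx two_ne_zero hC1 x y t)
      (fun x => hasDerivAt_pdx one_ne_zero hC2 x y t) b0 bL bα
  have iS : ∫ x in 0..L, ∫ y in 0..L, S x y ≤ 0 := by
    rw [intervalIntegral_swap_of_continuous cS]
    have h : ∀ y, ∫ x in 0..L, S x y ≤ 0 := fun y =>
      integral_affine_weight_mul_deriv_nonpos hL.le ha hK (by fun_prop) (fun x => hVx x y)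
        (by simp [hV])
    have := intervalIntegral.integral_mono_on (μ := volume) (g := fun _ => (0 : ℝ)) hL.le
      (Continuous.intervalIntegrable (by fun_prop) _ _) intervalIntegrable_const
      (fun y _ => h y)
    simpa using this
  have iQ : 0 ≤ ∫ x in 0..L, ∫ y in 0..L, Q x y := by
    refine intervalIntegral.integral_nonneg hL.le fun x hx => ?_
    have hd : ∀ y, HasDerivAt (fun y => 2 * (a * x + K) * (u x y t * V x y)) (Q x y) y :=
      fun y => ((hasDerivAt_pdy three_ne_zero hC x y t).mul (hVy x y)).const_mul _
    rw [intervalIntegral.integral_eq_sub_of_hasDerivAt (fun y _ => hd y)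
      (Continuous.intervalIntegrable (by fun_prop) _ _), hVtop x hx, hVbot x hx]
    have hx0 : 0 ≤ a * x + K := add_nonneg (mul_nonneg ha hx.1) hK
    have : 2 * (a * x + K) * (u x L t * (β * u x L t)) - 2 * (a * x + K) * (u x 0 t * 0)
        = 2 * (a * x + K) * (β * u x L t ^ 2) := by ring
    rw [this]
    positivity
  have key : ∫ x in 0..L, ∫ y in 0..L, 2 * (a * x + K) * u x y t * pdt u x y t ≤
      ∫ x in 0..L, ∫ y in 0..L, ((R x y - Q x y) - (P x y - S x y)) := by
    refine intervalIntegral₂_mono_of_le_Ioo (by fun_prop) (by fun_prop) hL.le hL.le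
      fun x hx y hy => le_of_eq ?_
    have h := hpde x hx y hy t ht
    rw [pdx3_eq, pdy2_eq] at h
    have hWx : pxInv L (fun s y' => pdy (pdy u) s y' t) x y = W x y := by
      rw [pxInv, hW, ← intervalIntegral.integral_symm]
    rw [hWx] at h
    simp only [hR, hP, hQ, hS]
    linear_combination (2 * (a * x + K) * u x y t) * h
  rw [intervalIntegral₂_sub (f := fun x y => R x y - Q x y) (g := fun x y => P x y - S x y)
    (by fun_prop) (by fun_prop), intervalIntegral₂_sub cR cQ, intervalIntegral₂_sub cP cS] at key
  linarith

/-- The weighted energy inequality integrated in time. -/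
theorem IsKPSolution.weighted_energy_le (hu : IsKPSolution L T α β u) (hL : 0 < L)
    (hβ : 0 ≤ β) {a K : ℝ} (ha : 0 ≤ a) (hK : 0 ≤ K) (hKα : (a * L + K) * α ^ 2 ≤ K)
    {τ : ℝ} (hτ : τ ∈ Icc 0 T) :
    (∫ x in 0..L, ∫ y in 0..L, (a * x + K) * u x y τ ^ 2)
        - ∫ x in 0..L, ∫ y in 0..L, (a * x + K) * u x y 0 ^ 2 ≤
      ∫ t in 0..τ, ∫ x in 0..L, ∫ y in 0..L, (a * u x y t ^ 2 - 3 * a * pdx u x y t ^ 2) := by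
  have hC := hu.1
  have c0 := hC.continuous
  have c1 : Continuous fun p : ℝ × ℝ × ℝ => pdx u p.1 p.2.1 p.2.2 :=
    (contDiff_pdx (n := 2) hC).continuous
  have e1 : Continuous fun p : ℝ × ℝ × ℝ => pdt u p.1 p.2.1 p.2.2 :=
    (contDiff_pdt (n := 2) hC).continuous
  have hd : ∀ t, HasDerivAt (fun t => ∫ x in 0..L, ∫ y in 0..L, (a * x + K) * u x y t ^ 2)
      (∫ x in 0..L, ∫ y in 0..L, 2 * (a * x + K) * u x y t * pdt u x y t) t := by
    refine fun t => hasDerivAt_intervalIntegral_of_continuous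
      (f := fun t x => ∫ y in 0..L, (a * x + K) * u x y t ^ 2)
      (f' := fun t x => ∫ y in 0..L, 2 * (a * x + K) * u x y t * pdt u x y t)
      (by fun_prop) (by fun_prop) (fun t x => ?_) 0 L t
    refine hasDerivAt_intervalIntegral_of_continuous
      (f := fun t y => (a * x + K) * u x y t ^ 2)
      (f' := fun t y => 2 * (a * x + K) * u x y t * pdt u x y t)
      (by fun_prop) (by fun_prop) (fun t y => ?_) 0 L t
    refine (((hasDerivAt_pdt three_ne_zero hC x y t).pow 2).const_mul (a * x + K)).congr_deriv ?_
    simp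
    ring
  rw [← intervalIntegral.integral_eq_sub_of_hasDerivAt (fun t _ => hd t)
    (Continuous.intervalIntegrable (by fun_prop) _ _)]
  exact intervalIntegral.integral_mono_on_of_le_Ioo hτ.1
    (Continuous.intervalIntegrable (by fun_prop) _ _)
    (Continuous.intervalIntegrable (by fun_prop) _ _)
    fun t ht => hu.weighted_energy_deriv_le hL hβ ha hK hKα ⟨ht.1, ht.2.trans_le hτ.2⟩

end WeightedEnergy

/-- Kato smoothing estimate: there is a constant `C = C(L,T,α,β) > 0` such that every
classical solution of the closed-loop linear KP-II system satisfies
`∫₀^T ∫_Ω (u² + u_x²) dx dy dt ≤ C ∫_Ω u(·,·,0)² dx dy`. -/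
theorem kp_kato_smoothing (L T α β : ℝ) (hL : 0 < L) (hT : 0 < T)
    (hα0 : 0 < |α|) (hα1 : |α| < 1) (hβ : 0 < β) :
    ∃ C > (0:ℝ), ∀ u : ℝ → ℝ → ℝ → ℝ, IsKPSolution L T α β u →
      (∫ t in (0:ℝ)..T, ∫ x in (0:ℝ)..L, ∫ y in (0:ℝ)..L,
          ((u x y t)^2 + (pdx u x y t)^2))
        ≤ C * ∫ x in (0:ℝ)..L, ∫ y in (0:ℝ)..L, (u x y 0)^2 := by
  have hα : α ^ 2 < 1 := (sq_lt_one_iff_abs_lt_one α).2 hα1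
  have hα' : 0 < 1 - α ^ 2 := sub_pos.2 hα
  set K : ℝ := L * α ^ 2 / (1 - α ^ 2) with hKdef
  have hK : 0 ≤ K := by positivity
  have hKα : (1 * L + K) * α ^ 2 ≤ K := by
    have : K * (1 - α ^ 2) = L * α ^ 2 := div_mul_cancel₀ _ hα'.ne'
    linarith
  refine ⟨T + (L + K + T), by positivity, fun u hu => ?_⟩
  have c0 := hu.1.continuous
  have c1 : Continuous fun p : ℝ × ℝ × ℝ => pdx u p.1 p.2.1 p.2.2 :=
    (contDiff_pdx (n := 2) hu.1).continuous
  set E₀ : ℝ := ∫ x in (0:ℝ)..L, ∫ y in (0:ℝ)..L, (u x y 0) ^ 2 with hE₀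
  have hdecay : ∀ t ∈ Set.Icc 0 T, ∫ x in (0:ℝ)..L, ∫ y in (0:ℝ)..L, (u x y t) ^ 2 ≤ E₀ := by
    intro t ht
    have := hu.weighted_energy_le hL hβ.le (a := 0) (K := 1) le_rfl zero_le_one
      (by linarith) ht
    simp only [zero_mul, zero_add, one_mul, mul_zero, sub_zero,
      intervalIntegral.integral_zero] at this
    linarith
  have hmass : ∫ t in (0:ℝ)..T, ∫ x in (0:ℝ)..L, ∫ y in (0:ℝ)..L, (u x y t) ^ 2 ≤ T * E₀ := by
    have := intervalIntegral.integral_mono_on (μ := volume) (g := fun _ => E₀) hT.le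
      (Continuous.intervalIntegrable (by fun_prop) _ _) intervalIntegrable_const hdecay
    simpa using this
  have hkato := hu.weighted_energy_le hL hβ.le zero_le_one hK hKα (Set.right_mem_Icc.2 hT.le)
  have hend : 0 ≤ ∫ x in (0:ℝ)..L, ∫ y in (0:ℝ)..L, (1 * x + K) * u x y T ^ 2 :=
    intervalIntegral.integral_nonneg hL.le fun x hx =>
      intervalIntegral.integral_nonneg hL.le fun y _ =>
        mul_nonneg (by linarith [hx.1]) (sq_nonneg _)
  have hstart : ∫ x in (0:ℝ)..L, ∫ y in (0:ℝ)..L, (1 * x + K) * u x y 0 ^ 2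
      ≤ (L + K) * E₀ := by
    rw [hE₀]
    simp_rw [← intervalIntegral.integral_const_mul]
    exact intervalIntegral₂_mono_of_le_Ioo (by fun_prop) (by fun_prop) hL.le hL.le
      fun x hx y _ => mul_le_mul_of_nonneg_right (by linarith [hx.2]) (sq_nonneg _)
  have split : ∀ c d : ℝ, ∫ t in (0:ℝ)..T, ∫ x in (0:ℝ)..L, ∫ y in (0:ℝ)..L,
        (c * (u x y t) ^ 2 - d * (pdx u x y t) ^ 2)
      = c * (∫ t in (0:ℝ)..T, ∫ x in (0:ℝ)..L, ∫ y in (0:ℝ)..L, (u x y t) ^ 2)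
        - d * ∫ t in (0:ℝ)..T, ∫ x in (0:ℝ)..L, ∫ y in (0:ℝ)..L, (pdx u x y t) ^ 2 := by
    intro c d
    simp_rw [← intervalIntegral.integral_const_mul]
    rw [← intervalIntegral.integral_sub (Continuous.intervalIntegrable (by fun_prop) _ _)
      (Continuous.intervalIntegrable (by fun_prop) _ _)]
    congr 1 with t
    exact intervalIntegral₂_sub (f := fun x y => c * (u x y t) ^ 2)
      (g := fun x y => d * (pdx u x y t) ^ 2) (by fun_prop) (by fun_prop) _ _ _ _
  have hgrad : 0 ≤ ∫ t in (0:ℝ)..T, ∫ x in (0:ℝ)..L, ∫ y in (0:ℝ)..L, (pdx u x y t) ^ 2 :=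
    intervalIntegral.integral_nonneg hT.le fun t _ =>
      intervalIntegral.integral_nonneg hL.le fun x _ =>
        intervalIntegral.integral_nonneg hL.le fun y _ => sq_nonneg _
  rw [split] at hkato
  have hsum := split 1 (-1)
  simp only [one_mul, neg_mul, sub_neg_eq_add] at hsum
  rw [hsum]
  linarith

end
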